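/- (Uniqueness) If (Γ,Π) ∼ (Δ,Π) where both sides contain a distinguished occurrence of the substructure Π in rightmost top-level position, then Γ ≡ Δ (syntactic equality), and hence (Γ,Π) ≡ (Δ,Π). -/

import Mathlib

set_option autoImplicit false

namespace NACLL

/-- Structures: binary trees whose leaves are formulas, with an empty structure.
`(∅,Γ)` and `(Γ,∅)` are identified with `Γ` via the smart constructor `comma`. -/
inductive Struct (F : Type) : Type where
  | emp : Struct F
  | leaf : F → Struct F
  | pair : Struct F → Struct F → Struct F

namespace Struct

/-- Pairing of structures, erasing empty substructures. -/
def comma {F : Type} : Struct F → Struct F → Struct F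
  | .emp, Δ => Δ
  | Γ, .emp => Γ
  | Γ, Δ => .pair Γ Δ

def map {F G : Type} (f : F → G) : Struct F → Struct G
  | .emp => .emp
  | .leaf a => .leaf (f a)
  | .pair l r => .pair (map f l) (map f r)

/-- Number of formula leaves of a structure. -/
def nleaves {F : Type} : Struct F → ℕ
  | .emp => 0
  | .leaf _ => 1
  | .pair l r => nleaves l + nleaves r

/-- All formula leaves of a structure satisfy a predicate. -/
def Forall {F : Type} (p : F → Prop) : Struct F → Prop
  | .emp => True
  | .leaf a => p a
  | .pair l r => Forall p l ∧ Forall p r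

end Struct

/-- Structural equivalence: the reflexive, symmetric, transitive closure of
top-level exchange and top-level associativity. -/
inductive StEquiv {F : Type} : Struct F → Struct F → Prop where
  | refl (Γ : Struct F) : StEquiv Γ Γ
  | symm {Γ Δ : Struct F} : StEquiv Γ Δ → StEquiv Δ Γ
  | trans {Γ Δ Θ : Struct F} : StEquiv Γ Δ → StEquiv Δ Θ → StEquiv Γ Θ
  | exch (Γ Δ : Struct F) : StEquiv (Γ.comma Δ) (Δ.comma Γ)
  | assoc (Γ Δ Θ : Struct F) : StEquiv (Γ.comma (Δ.comma Θ)) ((Γ.comma Δ).comma Θ)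

/-- Contexts with one hole. -/
inductive Ctx (F : Type) : Type where
  | hole : Ctx F
  | pairL : Ctx F → Struct F → Ctx F
  | pairR : Struct F → Ctx F → Ctx F

namespace Ctx

/-- Filling the hole of a context with a structure (empty substructures are erased). -/
def fill {F : Type} : Ctx F → Struct F → Struct F
  | .hole, Ξ => Ξ
  | .pairL R Δ, Ξ => (fill R Ξ).comma Δ
  | .pairR Γ R, Ξ => Γ.comma (fill R Ξ)

/-- A context viewed as a structure over `Option F`, the hole being the leaf `none`. -/
def toStruct {F : Type} : Ctx F → Struct (Option F)
  | .hole => .leaf none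
  | .pairL R Δ => (toStruct R).comma (Δ.map some)
  | .pairR Γ R => (Γ.map some).comma (toStruct R)

def size {F : Type} : Ctx F → ℕ
  | .hole => 0
  | .pairL R _ => size R + 2
  | .pairR _ R => size R + 1

/-- The designator. -/
def desi {F : Type} : Ctx F → Struct F
  | .hole => .emp
  | .pairL R Δ => desi (.pairR Δ R)
  | .pairR Γ .hole => Γ
  | .pairR Γ (.pairR Δ P) => desi (.pairR (Γ.comma Δ) P)
  | .pairR Γ (.pairL D Θp) => desi (.pairR (Θp.comma Γ) D)
termination_by c => size c
decreasing_by all_goals simp [size]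

/-- All formula leaves of a context (other than the hole) satisfy a predicate. -/
def Forall {F : Type} (p : F → Prop) : Ctx F → Prop
  | .hole => True
  | .pairL R Δ => Forall p R ∧ Δ.Forall p
  | .pairR Γ R => Γ.Forall p ∧ Forall p R

end Ctx

/-- Structural equivalence of one-hole contexts, treating the hole as a leaf. -/
def CtxEquiv {F : Type} (T X : Ctx F) : Prop := StEquiv T.toStruct X.toStruct

/-- Contexts with two holes (the first hole is the designated one). -/
inductive Ctx2 (F : Type) : Type where
  | splitLR : Ctx F → Ctx F → Ctx2 F
  | splitRL : Ctx F → Ctx F → Ctx2 F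
  | pairL : Ctx2 F → Struct F → Ctx2 F
  | pairR : Struct F → Ctx2 F → Ctx2 F

namespace Ctx2

/-- Filling the first hole of a two-hole context, yielding a one-hole context. -/
def fillFst {F : Type} : Ctx2 F → Struct F → Ctx F
  | .splitLR c1 c2, Δ => .pairR (c1.fill Δ) c2
  | .splitRL c2 c1, Δ => .pairL c2 (c1.fill Δ)
  | .pairL R Γ, Δ => .pairL (fillFst R Δ) Γ
  | .pairR Γ R, Δ => .pairR Γ (fillFst R Δ)

end Ctx2

end NACLL

namespace NACLL

/-!
Exchange and associativity only move the root of an unrooted tree around its edges. Hence the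
structures left over when the tree is rerooted at a leaf labelled `x` are invariant under
structural equivalence. For `(Γ, x)` with `x` not in `Γ`, the only such structure is `Γ`.
-/

namespace Struct

variable {F G : Type}

theorem emp_comma (Γ : Struct F) : emp.comma Γ = Γ := rfl

theorem comma_emp (Γ : Struct F) : Γ.comma emp = Γ := by
  cases Γ <;> rfl

theorem comma_eq_pair {Γ Δ : Struct F} (hΓ : Γ ≠ emp) (hΔ : Δ ≠ emp) :
    Γ.comma Δ = pair Γ Δ := by
  cases Γ <;> cases Δ <;> first | rfl | contradiction

theorem map_injective {f : F → G} (hf : Function.Injective f) :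
    Function.Injective (map f) := by
  intro Γ
  induction Γ with
  | emp => intro Δ h; cases Δ <;> simp_all [map]
  | leaf a => intro Δ h; cases Δ <;> simp_all [map, hf.eq_iff]
  | pair l r ihl ihr =>
    intro Δ h
    cases Δ with
    | emp | leaf => cases h
    | pair l' r' =>
      obtain ⟨hl, hr⟩ := pair.inj h
      rw [ihl hl, ihr hr]

theorem forall_map_of_forall {f : F → G} {p : G → Prop} (h : ∀ a, p (f a)) (Γ : Struct F) :
    (Γ.map f).Forall p := by
  induction Γ with
  | emp => trivial
  | leaf a => exact h a
  | pair l r ihl ihr => exact ⟨ihl, ihr⟩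

/-- `complements x Λ Γ` collects the remainders of the tree `(Λ, Γ)` when it is rerooted at the
leaves `x` of `Γ`: the structures `Δ` for which exchange and associativity, applied along the path
to such a leaf, turn `(Λ, Γ)` into `(Δ, x)`. The accumulator `Λ` is the part of the tree already
left behind on that path, so `complements x emp Γ` are the remainders of `Γ` itself. -/
def complements (x : G) : Struct G → Struct G → Set (Struct G)
  | _, emp => ∅
  | Λ, leaf y => {Δ | y = x ∧ Δ = Λ}
  | Λ, pair l r => complements x (r.comma Λ) l ∪ complements x (Λ.comma l) r

theorem complements_comma (x : G) (Λ l r : Struct G) :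
    complements x Λ (l.comma r) =
      complements x (r.comma Λ) l ∪ complements x (Λ.comma l) r := by
  by_cases hl : l = emp
  · simp [hl, emp_comma, comma_emp, complements]
  by_cases hr : r = emp
  · simp [hr, emp_comma, comma_emp, complements]
  rw [comma_eq_pair hl hr, complements]

theorem complements_eq_empty {x : G} {Γ : Struct G} (hΓ : Γ.Forall (· ≠ x)) (Λ : Struct G) :
    complements x Λ Γ = ∅ := by
  induction Γ generalizing Λ with
  | emp => rfl
  | leaf y => exact Set.eq_empty_of_forall_notMem fun _ hΔ => hΓ hΔ.1
  | pair l r ihl ihr => rw [complements, ihl hΓ.1, ihr hΓ.2, Set.union_empty]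

theorem complements_comma_leaf (x : G) (Γ : Struct G) :
    complements x emp (Γ.comma (leaf x)) = insert Γ (complements x (leaf x) Γ) := by
  simp [complements_comma, complements, emp_comma, comma_emp]

end Struct

theorem StEquiv.complements_eq {G : Type} {Γ Δ : Struct G} (h : StEquiv Γ Δ) (x : G) :
    Struct.complements x .emp Γ = Struct.complements x .emp Δ := by
  induction h with
  | refl => rfl
  | symm _ ih => exact ih.symm
  | trans _ _ ih₁ ih₂ => exact ih₁.trans ih₂
  | exch Γ Δ =>
    simp only [Struct.complements_comma, Struct.comma_emp, Struct.emp_comma]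
    exact Set.union_comm _ _
  | assoc Γ Δ Θ =>
    simp only [Struct.complements_comma, Struct.comma_emp, Struct.emp_comma]
    exact (Set.union_assoc _ _ _).symm

theorem uniqueness_general {G : Type} {x : G} {Γ Δ : Struct G} (hΓ : Γ.Forall (· ≠ x))
    (h : StEquiv (Γ.comma (.leaf x)) (Δ.comma (.leaf x))) : Γ = Δ := by
  have hcomplements := h.complements_eq x
  rw [Struct.complements_comma_leaf, Struct.complements_comma_leaf,
    Struct.complements_eq_empty hΓ] at hcomplements
  have hΔ : Δ ∈ insert Γ (∅ : Set (Struct G)) := hcomplements ▸ Set.mem_insert Δ _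
  exact (hΔ.resolve_right id).symm

/-- **Uniqueness.**  If `(Γ,Π) ∼ (Δ,Π)` with both sides containing a
distinguished occurrence of `Π` in rightmost top-level position (an equivalence
of the contexts `(Γ,*)` and `(Δ,*)`), then `Γ ≡ Δ`, and hence `(Γ,Π) ≡ (Δ,Π)`. -/
theorem uniqueness {F : Type} (Γ Δ Θp : Struct F)
    (h : CtxEquiv (Ctx.pairR Γ .hole) (Ctx.pairR Δ .hole)) :
    Γ = Δ ∧ Γ.comma Θp = Δ.comma Θp := by
  have hΓΔ : Γ = Δ := Struct.map_injective (Option.some_injective F)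
    (uniqueness_general (Γ.forall_map_of_forall (p := (· ≠ none)) Option.some_ne_none) h)
  exact ⟨hΓΔ, congrArg (·.comma Θp) hΓΔ⟩

end NACLL
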